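/- Let 0 ≤ r1, r2 ≤ n, 0 ≤ s ≤ min(r1, n − r1, r2, n − r2), and let k be an integer with max(0, r2 − r1) ≤ k ≤ min(r2, n − r1). Then λ_s^{r1,r2}(k; n) = ([r1]_s / [r2]_s) · Σ_{j=0}^s (−1)^j binom(s, j) · binom(r1 − s, r1 − r2 + k − j) · binom(n − r1 − s, k − j) / (binom(r1, r1 − r2 + k) · binom(n − r1, k)). -/

import Mathlib

/-- Falling factorial `z(z-1)⋯(z-k+1)` for complex `z`. -/
noncomputable def cfall (z : ℂ) (k : ℕ) : ℂ := ∏ i ∈ Finset.range k, (z - i)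

/-- Generalized binomial coefficient `binom(t, j)` for complex `t`. -/
noncomputable def cbinom (t : ℂ) (j : ℕ) : ℂ := cfall t j / (Nat.factorial j)

/-- The Hahn kernel `λ_s^{r1,r2}(t; n)`. -/
noncomputable def hahn (n r1 r2 s : ℕ) (t : ℂ) : ℂ :=
  ∑ j ∈ Finset.range (s + 1),
    (-1 : ℂ) ^ j * cbinom t j * cfall (s : ℂ) j * cfall ((n : ℂ) - s + 1) j /
      (cfall ((n : ℂ) - r1) j * cfall (r2 : ℂ) j)

/-- Binomial coefficient `binom(a, b)` with integer lower index, equal to `0` when `b < 0`. -/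
def ichoose (a : ℕ) (b : ℤ) : ℕ := if 0 ≤ b then a.choose b.toNat else 0

/-!
Put `x = n - r1`, `y = r2`, `c = n - s + 1`, `v = r1 - r2 + t`. Over the common denominator
`[x]_s [y]_s` the kernel becomes `∑ (-1)^i binom(s, i) [t]_i [c]_i [x-i]_(s-i) [y-i]_(s-i)`, and the
claim is Sheppard's transformation of this terminating `₃F₂(1)` into
`∑ (-1)^i binom(s, i) [t]_i [v]_i [x-t]_(s-i) [y-t]_(s-i)`, valid in every commutative ring whenever
`c + t + s = x + y + v + 1`. Both sums satisfy the recurrence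
`F (s + 1) = (x - t) (y - t) F s - t v G s`, where both `F s` and `G s` have `x`, `y`, `c` lowered
by one and `G s` moreover has `t`, `v` lowered by one. For the second sum this is Pascal's rule term
by term; for the first, the terms left over by Pascal's rule cancel after the shift `i ↦ i + 1`.
-/

open Finset Polynomial

section BinomialSums

variable {R : Type*} [Semiring R]

theorem sum_antidiagonal_choose_succ (n : ℕ) (f : ℕ → ℕ → R) :
    ∑ ij ∈ antidiagonal (n + 1), ((n + 1).choose ij.1 : R) * f ij.1 ij.2 =
      ∑ ij ∈ antidiagonal n, (n.choose ij.1 : R) * (f ij.1 (ij.2 + 1) + f (ij.1 + 1) ij.2) := by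
  rw [sum_antidiagonal_choose_succ_mul, ← sum_add_distrib]
  refine sum_congr rfl fun ij hij => ?_
  rw [Nat.choose_symm_of_eq_add (mem_antidiagonal.1 hij).symm, mul_add]

theorem sum_antidiagonal_choose_mul_fst (n : ℕ) (g : ℕ → ℕ → R) :
    ∑ ij ∈ antidiagonal (n + 1), ((n + 1).choose ij.1 : R) * (ij.1 * g ij.1 ij.2) =
      (n + 1) * ∑ ij ∈ antidiagonal n, (n.choose ij.1 : R) * g (ij.1 + 1) ij.2 := by
  rw [Nat.sum_antidiagonal_succ, mul_sum]
  simp only [Nat.cast_zero, zero_mul, mul_zero, zero_add]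
  refine sum_congr rfl fun ⟨i, j⟩ _ => ?_
  have h_absorb := congrArg (Nat.cast (R := R)) (Nat.add_one_mul_choose_eq n i)
  push_cast at h_absorb ⊢
  rw [← mul_assoc, ← mul_assoc, h_absorb]

theorem sum_antidiagonal_choose_mul_snd (n : ℕ) (g : ℕ → ℕ → R) :
    ∑ ij ∈ antidiagonal (n + 1), ((n + 1).choose ij.1 : R) * (ij.2 * g ij.1 ij.2) =
      (n + 1) * ∑ ij ∈ antidiagonal n, (n.choose ij.1 : R) * g ij.1 (ij.2 + 1) := by
  rw [Nat.sum_antidiagonal_succ', mul_sum]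
  simp only [Nat.cast_zero, zero_mul, mul_zero, zero_add]
  refine sum_congr rfl fun ⟨i, j⟩ hij => ?_
  obtain rfl := mem_antidiagonal.1 hij
  have h_sub : i + j + 1 - i = j + 1 := by omega
  have h_absorb := congrArg (Nat.cast (R := R)) (Nat.choose_mul_succ_eq (i + j) i)
  rw [h_sub, mul_comm] at h_absorb
  push_cast at h_absorb ⊢
  rw [← mul_assoc, ← mul_assoc, h_absorb]

theorem sum_antidiagonal_choose_shift (n : ℕ) {f g : ℕ → ℕ → R}
    (hfg : ∀ i j, f i (j + 1) = g (i + 1) j) :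
    ∑ ij ∈ antidiagonal n, (n.choose ij.1 : R) * (ij.2 * f ij.1 ij.2) =
      ∑ ij ∈ antidiagonal n, (n.choose ij.1 : R) * (ij.1 * g ij.1 ij.2) := by
  cases n with
  | zero => simp
  | succ n => simp only [sum_antidiagonal_choose_mul_fst, sum_antidiagonal_choose_mul_snd, hfg]

end BinomialSums

section FallingFactorialSums

variable {R : Type*} [CommRing R]

local notation "[" x "]_" k:max => eval x (descPochhammer _ k)

theorem descPochhammer_succ_eval_left (k : ℕ) (x : R) : [x]_(k + 1) = x * [x - 1]_k := by
  simp [descPochhammer_succ_left]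

theorem descPochhammer_add_eval (i j : ℕ) (x : R) : [x]_(i + j) = [x]_i * [x - i]_j := by
  simp [← descPochhammer_mul]

theorem sub_mul_descPochhammer_eval_sub (i : ℕ) (x : R) :
    (x - i) * ([x]_i - [x - 1]_i) = i * [x - 1]_i := by
  linear_combination descPochhammer_succ_eval_left i x - descPochhammer_succ_eval i x

theorem descPochhammer_eval_sub_eval_sub_one (i : ℕ) (x : R) :
    [x]_i - [x - 1]_i = i * [x - 1]_(i - 1) := by
  cases i with
  | zero => simp
  | succ i =>
    rw [descPochhammer_succ_eval_left, descPochhammer_succ_eval, Nat.add_sub_cancel]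
    push_cast
    ring

/-- The sum `∑ (-1)^i binom(s, i) [u]_i [v]_i [a]_(s-i) [b]_(s-i)`, which at natural arguments is
the binomial sum of the classical expression of the Hahn kernel, cleared of denominators. It is
indexed by the pairs `(i, j)` with `i + j = s`, so that no truncated subtraction occurs. -/
noncomputable def crossSum (s : ℕ) (u v a b : R) : R :=
  ∑ ij ∈ antidiagonal s, (s.choose ij.1 : R) *
    ((-1) ^ ij.1 * [u]_ij.1 * [v]_ij.1 * ([a]_ij.2 * [b]_ij.2))

/-- The numerator of the Hahn kernel `λ_s^{r1,r2}(t; n)` over the common denominator `[x]_s [y]_s`,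
which it becomes for `x = n - r1`, `y = r2` and `c = n - s + 1`; here all parameters are free. The
index `(i, j)` runs over `i + j = s`, as in `crossSum`. -/
noncomputable def hahnNumerator (s : ℕ) (t c x y : R) : R :=
  ∑ ij ∈ antidiagonal s, (s.choose ij.1 : R) *
    ((-1) ^ ij.1 * [t]_ij.1 * [c]_ij.1 * ([x - ij.1]_ij.2 * [y - ij.1]_ij.2))

theorem crossSum_succ (s : ℕ) (u v a b : R) :
    crossSum (s + 1) u v a b =
      a * b * crossSum s u v (a - 1) (b - 1) - u * v * crossSum s (u - 1) (v - 1) a b := by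
  unfold crossSum
  rw [sum_antidiagonal_choose_succ _ fun i j => (-1) ^ i * [u]_i * [v]_i * ([a]_j * [b]_j),
    mul_sum, mul_sum, ← sum_sub_distrib]
  refine sum_congr rfl fun ij _ => ?_
  simp only [descPochhammer_succ_eval_left]
  ring

theorem hahnNumerator_succ (s : ℕ) {t v c x y : R} (h : c + t + s = x + y + v) :
    hahnNumerator (s + 1) t c x y =
      (x - t) * (y - t) * hahnNumerator s t (c - 1) (x - 1) (y - 1) -
        t * v * hahnNumerator s (t - 1) (c - 1) (x - 1) (y - 1) := by
  have h_shift := sum_antidiagonal_choose_shift s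
    (f := fun i j => (-1) ^ (i + 1) * [t]_(i + 1) * [c - 1]_i * ([x - i - 1]_j * [y - i - 1]_j))
    (g := fun i j => (-1) ^ i * [t]_i * [c - 1]_(i - 1) * ([x - i]_(j + 1) * [y - i]_(j + 1)))
    fun i j => by simp only [Nat.cast_add_one, sub_sub, Nat.add_sub_cancel]
  unfold hahnNumerator
  rw [sum_antidiagonal_choose_succ _ fun i j =>
      (-1) ^ i * [t]_i * [c]_i * ([x - i]_j * [y - i]_j),
    mul_sum, mul_sum, ← sum_sub_distrib, ← sub_eq_zero, ← sum_sub_distrib,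
    ← sub_eq_zero.2 h_shift.symm, ← sum_sub_distrib]
  refine sum_congr rfl fun ⟨i, j⟩ hij => ?_
  have hs : (s : R) = i + j := by rw [← mem_antidiagonal.1 hij, Nat.cast_add]
  have hv : v = c + t + (i + j) - x - y := by linear_combination -h + hs
  have h_succ_t : t * [t - 1]_i = (t - i) * [t]_i := by
    rw [← descPochhammer_succ_eval_left, descPochhammer_succ_eval, mul_comm]
  have h_leftover :
      (x - i) * (y - i) * [c]_i - (t - i) * ((c - i) * [c]_i) - (x - t) * (y - t) * [c - 1]_i +
          v * ((t - i) * [c - 1]_i) =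
        i * ((x - i) * (y - i) * [c - 1]_(i - 1)) + j * ((t - i) * [c - 1]_i) := by
    subst hv
    linear_combination (x - i) * (y - i) * descPochhammer_eval_sub_eval_sub_one i c -
      (t - i) * sub_mul_descPochhammer_eval_sub i c
  have h_sub_one_sub (z : R) : z - 1 - i = z - i - 1 := by ring
  have h_sub_cast_succ (z : R) : z - ((i + 1 : ℕ) : R) = z - i - 1 := by push_cast; ring
  simp only [h_sub_one_sub, h_sub_cast_succ, descPochhammer_succ_eval_left _ (x - _),
    descPochhammer_succ_eval_left _ (y - _), descPochhammer_succ_eval i, pow_succ]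
  linear_combination (s.choose i : R) * (-1) ^ i * [x - i - 1]_j * [y - i - 1]_j *
    ([t]_i * h_leftover + v * [c - 1]_i * h_succ_t)

theorem hahnNumerator_eq_crossSum (s : ℕ) {t v c x y : R} (h : c + t + s = x + y + v + 1) :
    hahnNumerator s t c x y = crossSum s t v (x - t) (y - t) := by
  induction s generalizing t v c x y with
  | zero => simp [hahnNumerator, crossSum]
  | succ s ih =>
    push_cast at h
    rw [hahnNumerator_succ s (v := v) (by linear_combination h), crossSum_succ,
      ih (v := v) (by linear_combination h), ih (v := v - 1) (by linear_combination h)]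
    ring_nf

theorem cfall_eq_descPochhammer_eval (z : ℂ) (k : ℕ) : cfall z k = [z]_k :=
  (descPochhammer_eval_eq_prod_range k z).symm

theorem cfall_natCast (m k : ℕ) : cfall (m : ℂ) k = m.descFactorial k := by
  rw [cfall_eq_descPochhammer_eval, descPochhammer_eval_eq_descFactorial]

theorem cfall_natCast_ne_zero {m k : ℕ} (hk : k ≤ m) : cfall (m : ℂ) k ≠ 0 := by
  rw [cfall_natCast]
  exact mod_cast (Nat.descFactorial_pos.2 hk).ne'

theorem cbinom_mul_cfall_natCast (t : ℂ) (s j : ℕ) :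
    cbinom t j * cfall (s : ℂ) j = s.choose j * cfall t j := by
  have hj : (j.factorial : ℂ) ≠ 0 := mod_cast j.factorial_ne_zero
  rw [cbinom, cfall_natCast, Nat.descFactorial_eq_factorial_mul_choose]
  push_cast
  field_simp

theorem hahn_eq_hahnNumerator_div {n r1 r2 s : ℕ} (t : ℂ) (hx : cfall ((n : ℂ) - r1) s ≠ 0)
    (hy : cfall (r2 : ℂ) s ≠ 0) :
    hahn n r1 r2 s t =
      hahnNumerator s t ((n : ℂ) - s + 1) ((n : ℂ) - r1) r2 /
        (cfall ((n : ℂ) - r1) s * cfall (r2 : ℂ) s) := by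
  rw [hahn, hahnNumerator, sum_div, ← Nat.sum_antidiagonal_eq_sum_range_succ_mk
    (fun ij => (-1 : ℂ) ^ ij.1 * cbinom t ij.1 * cfall (s : ℂ) ij.1 *
      cfall ((n : ℂ) - s + 1) ij.1 / (cfall ((n : ℂ) - r1) ij.1 * cfall (r2 : ℂ) ij.1))]
  refine sum_congr rfl fun ⟨i, j⟩ hij => ?_
  obtain rfl := mem_antidiagonal.1 hij
  rw [mul_assoc ((-1) ^ i), cbinom_mul_cfall_natCast]
  simp only [cfall_eq_descPochhammer_eval, descPochhammer_add_eval] at hx hy ⊢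
  have hx_fst := left_ne_zero_of_mul hx
  have hx_snd := right_ne_zero_of_mul hx
  have hy_fst := left_ne_zero_of_mul hy
  have hy_snd := right_ne_zero_of_mul hy
  field_simp

theorem hahn_eq_crossSum_div {n r1 r2 s : ℕ} (t : ℂ) (hx : cfall ((n : ℂ) - r1) s ≠ 0)
    (hy : cfall (r2 : ℂ) s ≠ 0) :
    hahn n r1 r2 s t =
      crossSum s t ((r1 : ℂ) - r2 + t) ((n : ℂ) - r1 - t) ((r2 : ℂ) - t) /
        (cfall ((n : ℂ) - r1) s * cfall (r2 : ℂ) s) := by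
  rw [hahn_eq_hahnNumerator_div t hx hy,
    hahnNumerator_eq_crossSum s (v := (r1 : ℂ) - r2 + t) (by ring)]

end FallingFactorialSums

theorem add_choose_mul_add_descFactorial (p q i j : ℕ) :
    (p + q).choose p * (p + i + (q + j)).descFactorial (i + j) =
      (p + i + (q + j)).choose (p + i) * (p + i).descFactorial i * (q + j).descFactorial j := by
  have h_desc (m k : ℕ) : m.factorial * (m + k).descFactorial k = (m + k).factorial := by
    simpa using Nat.factorial_mul_descFactorial (Nat.le_add_left k m)
  refine Nat.eq_of_mul_eq_mul_left (mul_pos p.factorial_pos q.factorial_pos) ?_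
  calc p.factorial * q.factorial * ((p + q).choose p * (p + i + (q + j)).descFactorial (i + j))
      = (p + q).choose p * p.factorial * q.factorial *
          (p + q + (i + j)).descFactorial (i + j) := by rw [add_add_add_comm p q]; ring
    _ = (p + i + (q + j)).factorial := by
        rw [Nat.choose_symm_add, Nat.add_choose_mul_factorial_mul_factorial, h_desc,
          add_add_add_comm]
    _ = (p + i + (q + j)).choose (p + i) *
          (p.factorial * (p + i).descFactorial i) * (q.factorial * (q + j).descFactorial j) := by
        rw [h_desc, h_desc, Nat.choose_symm_add, Nat.add_choose_mul_factorial_mul_factorial]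
    _ = _ := by ring

theorem ichoose_natCast (m k : ℕ) : ichoose m (k : ℤ) = m.choose k := by
  simp [ichoose]

theorem ichoose_sub_mul_descFactorial (b c i j : ℕ) :
    ichoose (b + c - (i + j)) ((b : ℤ) - i) * (b + c).descFactorial (i + j) =
      (b + c).choose b * b.descFactorial i * c.descFactorial j := by
  rcases lt_or_ge b i with hbi | hib
  · rw [ichoose, if_neg (by omega), Nat.descFactorial_of_lt hbi]
    simp
  rcases lt_or_ge c j with hcj | hjc
  · rw [Nat.descFactorial_of_lt hcj, mul_zero, mul_eq_zero, Nat.descFactorial_eq_zero_iff_lt,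
      or_iff_not_imp_right, ichoose, if_pos (by omega)]
    intro h
    exact Nat.choose_eq_zero_of_lt (by omega)
  obtain ⟨p, rfl⟩ := Nat.exists_eq_add_of_le' hib
  obtain ⟨q, rfl⟩ := Nat.exists_eq_add_of_le' hjc
  have h_top : p + i + (q + j) - (i + j) = p + q := by omega
  have h_bot : ((p + i : ℕ) : ℤ) - i = p := by push_cast; ring
  rw [h_top, h_bot, ichoose_natCast, add_choose_mul_add_descFactorial]

theorem crossSum_natCast_mul_choose (s k a u b : ℕ) :
    crossSum s (k : ℂ) u b a * ((u + a).choose u * (k + b).choose k) =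
      cfall ((u + a : ℕ) : ℂ) s * cfall ((k + b : ℕ) : ℂ) s *
        ∑ j ∈ range (s + 1), (-1 : ℂ) ^ j * s.choose j *
          ichoose (u + a - s) ((u : ℤ) - j) * ichoose (k + b - s) ((k : ℤ) - j) := by
  rw [crossSum, sum_mul, mul_sum, ← Nat.sum_antidiagonal_eq_sum_range_succ_mk
    (fun ij => cfall ((u + a : ℕ) : ℂ) s * cfall ((k + b : ℕ) : ℂ) s *
      ((-1 : ℂ) ^ ij.1 * s.choose ij.1 * ichoose (u + a - s) ((u : ℤ) - ij.1) *
        ichoose (k + b - s) ((k : ℤ) - ij.1)))]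
  refine sum_congr rfl fun ⟨i, j⟩ hij => ?_
  obtain rfl := mem_antidiagonal.1 hij
  have hu := congrArg (Nat.cast (R := ℂ)) (ichoose_sub_mul_descFactorial u a i j)
  have hk := congrArg (Nat.cast (R := ℂ)) (ichoose_sub_mul_descFactorial k b i j)
  simp only [cfall_natCast, descPochhammer_eval_eq_descFactorial]
  push_cast at hu hk ⊢
  linear_combination (-(-1) ^ i * ((i + j).choose i : ℂ)) *
    ((k + b).choose k * k.descFactorial i * b.descFactorial j * hu +
      ichoose (u + a - (i + j)) ((u : ℤ) - i) * (u + a).descFactorial (i + j) * hk)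

/-- The truncated subtraction `r1 - s` does no harm for `s > r1`: there `[r1]_s = 0`, and the kernel
vanishes as well. -/
theorem stmt_15_general (n r1 r2 s : ℕ) (h1 : r1 ≤ n) (hs : s ≤ min r2 (n - r1))
    (k : ℕ) (hk1 : r2 ≤ r1 + k) (hk2 : k ≤ min r2 (n - r1)) :
    hahn n r1 r2 s (k : ℂ) =
      (cfall (r1 : ℂ) s / cfall (r2 : ℂ) s) *
        ∑ j ∈ Finset.range (s + 1),
          (-1 : ℂ) ^ j * (s.choose j : ℂ) *
            (ichoose (r1 - s) ((r1 : ℤ) - r2 + k - j) : ℂ) *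
            (ichoose (n - r1 - s) ((k : ℤ) - j) : ℂ) /
            ((ichoose r1 ((r1 : ℤ) - r2 + k) : ℂ) * (ichoose (n - r1) (k : ℤ) : ℂ)) := by
  obtain ⟨hs_r2, hs_r1⟩ := le_min_iff.1 hs
  obtain ⟨hk_r2, hk_r1⟩ := le_min_iff.1 hk2
  obtain ⟨a, rfl⟩ := Nat.exists_eq_add_of_le hk_r2
  obtain ⟨b, hb⟩ := Nat.exists_eq_add_of_le hk_r1
  obtain ⟨u, rfl⟩ : ∃ u, r1 = u + a := ⟨r1 - a, by omega⟩
  obtain rfl : n = u + a + (k + b) := by omega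
  have h_lower : ((u + a : ℕ) : ℤ) - (k + a : ℕ) + k = u := by push_cast; ring
  have h_lower_cast : ((u + a : ℕ) : ℂ) - (k + a : ℕ) + k = u := by push_cast; ring
  have h_diff_cast : ((u + a + (k + b) : ℕ) : ℂ) - (u + a : ℕ) = (k + b : ℕ) := by push_cast; ring
  have h_sub_cast (c : ℕ) : ((k + c : ℕ) : ℂ) - k = c := by push_cast; ring
  rw [hb] at hs_r1
  have hx : cfall ((k + b : ℕ) : ℂ) s ≠ 0 := cfall_natCast_ne_zero hs_r1
  have hy : cfall ((k + a : ℕ) : ℂ) s ≠ 0 := cfall_natCast_ne_zero hs_r2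
  have h_choose : ((u + a).choose u * (k + b).choose k : ℂ) ≠ 0 :=
    mod_cast (mul_pos (Nat.choose_pos (Nat.le_add_right u a))
      (Nat.choose_pos (Nat.le_add_right k b))).ne'
  rw [hahn_eq_crossSum_div _ (h_diff_cast ▸ hx) hy, h_diff_cast, h_lower_cast, h_sub_cast,
    h_sub_cast, ← sum_div, h_lower, hb, ichoose_natCast, ichoose_natCast, div_mul_div_comm,
    div_eq_div_iff (mul_ne_zero hx hy) (mul_ne_zero hy h_choose)]
  linear_combination cfall ((k + a : ℕ) : ℂ) s * crossSum_natCast_mul_choose s k a u b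

/-- The classical expression of the Hahn kernel at an integer point `k` with
`max(0, r2-r1) ≤ k ≤ min(r2, n-r1)`. -/
theorem stmt_15 (n r1 r2 s : ℕ) (h1 : r1 ≤ n) (h2 : r2 ≤ n)
    (hs : s ≤ min (min r1 (n - r1)) (min r2 (n - r2)))
    (k : ℕ) (hk1 : r2 ≤ r1 + k) (hk2 : k ≤ min r2 (n - r1)) :
    hahn n r1 r2 s (k : ℂ) =
      (cfall (r1 : ℂ) s / cfall (r2 : ℂ) s) *
        ∑ j ∈ Finset.range (s + 1),
          (-1 : ℂ) ^ j * (s.choose j : ℂ) *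
            (ichoose (r1 - s) ((r1 : ℤ) - r2 + k - j) : ℂ) *
            (ichoose (n - r1 - s) ((k : ℤ) - j) : ℂ) /
            ((ichoose r1 ((r1 : ℤ) - r2 + k) : ℂ) * (ichoose (n - r1) (k : ℤ) : ℂ)) :=
  stmt_15_general n r1 r2 s h1 (by omega) k hk1 hk2
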